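/- Andrews's balanced 5F4 evaluation: for every nonnegative integer m and all complex x, z avoiding the poles of the denominators, the terminating sum Σ_{k=0}^{2m+1} (-2m-1)_k (x+2m+2)_k (x-z+1/2)_k (x+m+1)_k (z+m+1)_k / (k! (x/2+1/2)_k (x/2+1)_k (2z+2m+2)_k (2x-2z+1)_k) equals 0. -/

import Mathlib

/-- The rising factorial (Pochhammer symbol) `(a)_k`. -/
noncomputable def rf (a : ℂ) (k : ℕ) : ℂ := (ascPochhammer ℂ k).eval a

open PowerSeries in
noncomputable def opT (A : ℂ) (f : ℂ⟦X⟧) : ℂ⟦X⟧ :=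
  (1 - X) * (X * derivative ℂ f) - C A * X * f

open PowerSeries in
noncomputable def opP (A p q c : ℂ) (f : ℂ⟦X⟧) : ℂ⟦X⟧ :=
  opT A (opT A (opT A f))
    + ((2 * C c - 1) * (1 + X) + 3 * X) * opT A (opT A f)
    + ((C p - 1) * (C q - 1) * (1 - X) ^ 2 + X * (C p * C q + 2 * C c * (2 * C c + 1))
        - 2 * C c * X * (1 - X)) * opT A f
    + (1 + X) * X * C p * C q * C c * f

open PowerSeries in
noncomputable def bS (α : ℂ) : ℂ⟦X⟧ := PowerSeries.mk fun n => rf α n / (n.factorial : ℂ)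

section
open PowerSeries

lemma rf_zero (a : ℂ) : rf a 0 = 1 := by simp [rf]

lemma rf_succ (a : ℂ) (k : ℕ) : rf a (k + 1) = rf a k * (a + k) := by
  simp [rf, ascPochhammer_succ_eval]

lemma rf_add (a : ℂ) (i j : ℕ) : rf a (i + j) = rf a i * rf (a + i) j := by
  induction j with
  | zero => simp [rf_zero]
  | succ j ih => rw [← add_assoc, rf_succ, ih, rf_succ]; push_cast; ring

lemma rf_one_add (a : ℂ) (j : ℕ) : rf a (j + 1) = a * rf (a + 1) j := by
  rw [add_comm, rf_add, rf_succ, rf_zero]; simp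

lemma rf_double (a : ℂ) (k : ℕ) :
    rf (a + 1) (2 * k) = 4 ^ k * rf (a / 2 + 1 / 2) k * rf (a / 2 + 1) k := by
  induction k with
  | zero => simp [rf_zero]
  | succ k ih =>
    rw [show 2 * (k + 1) = 2 * k + 1 + 1 by ring, rf_succ, rf_succ, ih, rf_succ, rf_succ]
    push_cast; ring

lemma opT_mul (A : ℂ) (q f : ℂ⟦X⟧) :
    opT A (q * f) = (1 - X) * (X * derivative ℂ q) * f + q * opT A f := by
  simp only [opT, Derivation.leibniz, smul_eq_mul]; ring

lemma opT_add (A : ℂ) (f g : ℂ⟦X⟧) : opT A (f + g) = opT A f + opT A g := by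
  simp only [opT, map_add]; ring

lemma opT_C (A r : ℂ) (f : ℂ⟦X⟧) : opT A (C r * f) = C r * opT A f := by
  rw [opT_mul]; simp [derivative_C]

lemma opP_add (A p q c : ℂ) (f g : ℂ⟦X⟧) :
    opP A p q c (f + g) = opP A p q c f + opP A p q c g := by
  simp only [opP, opT_add]; ring

lemma opP_C (A p q c r : ℂ) (f : ℂ⟦X⟧) :
    opP A p q c (C r * f) = C r * opP A p q c f := by
  simp only [opP, opT_C]; ring

lemma X_deriv_pow (k : ℕ) : (X : ℂ⟦X⟧) * derivative ℂ (X ^ k : ℂ⟦X⟧) = C (k : ℂ) * X ^ k := by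
  cases k with
  | zero => simp
  | succ k => simp [Derivation.leibniz_pow]; ring

lemma bS_deriv (α : ℂ) : (1 - X) * derivative ℂ (bS α) = C α * bS α := by
  ext n
  rw [sub_mul, one_mul, map_sub, coeff_C_mul]
  cases n with
  | zero => simp [bS, coeff_derivative, rf_succ, rf_zero]
  | succ n =>
    rw [coeff_succ_X_mul]
    simp only [coeff_derivative, bS, coeff_mk, rf_succ, Nat.factorial_succ]
    have : (n.factorial : ℂ) ≠ 0 := by exact_mod_cast n.factorial_ne_zero
    have h1 : (n : ℂ) + 1 ≠ 0 := by exact_mod_cast n.succ_ne_zero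
    have h2 : (n : ℂ) + 1 + 1 ≠ 0 := by exact_mod_cast (n+1).succ_ne_zero
    push_cast
    field_simp
    ring

lemma bS_shift (α : ℂ) : (1 - X) * bS (α + 1) = bS α := by
  ext n
  rw [sub_mul, one_mul, map_sub]
  cases n with
  | zero => simp [bS, rf_zero]
  | succ n =>
    rw [coeff_succ_X_mul]
    simp only [bS, coeff_mk, rf_one_add α]
    simp only [rf_succ, Nat.factorial_succ]
    have : (n.factorial : ℂ) ≠ 0 := by exact_mod_cast n.factorial_ne_zero
    have h1 : (n : ℂ) + 1 ≠ 0 := by exact_mod_cast n.succ_ne_zero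
    push_cast
    field_simp
    ring

lemma opT_f (A : ℂ) (k : ℕ) :
    opT A (X ^ k * bS (A + 2 * k)) = C (k : ℂ) * (1 + X) * (X ^ k * bS (A + 2 * k)) := by
  have h := bS_deriv (A + 2 * k)
  have h2 := X_deriv_pow k
  rw [opT_mul, opT]
  simp only [map_add, map_mul, map_ofNat] at h
  linear_combination (1 - X) * bS (A + 2 * k) * h2 + X ^ k * X * h

lemma deriv_pow_one_sub (N : ℕ) :
    (1 - X) * derivative ℂ ((1 - X : ℂ⟦X⟧) ^ N) = - C (N : ℂ) * (1 - X) ^ N := by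
  cases N with
  | zero => simp
  | succ k => simp [Derivation.leibniz_pow]; ring

lemma opT_h (c : ℂ) (m j : ℕ) (hj : j ≤ m) :
    opT (c - m) (X ^ (2 * j) * (1 - X) ^ (m - j)) =
      (C (j : ℂ) * (2 - X) - C c * X) * (X ^ (2 * j) * (1 - X) ^ (m - j)) := by
  have h2 := X_deriv_pow (2 * j)
  have h := deriv_pow_one_sub (m - j)
  rw [opT_mul, opT]
  rw [Nat.cast_sub hj] at h
  push_cast at h2
  simp only [map_sub, map_mul, map_ofNat] at h h2 ⊢
  linear_combination (1 - X) * (1 - X) ^ (m - j) * h2 + X ^ (2 * j) * X * h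

lemma opP_f (A p q c : ℂ) (hq : q = 2 * c + 1 - p) (k : ℂ) (f : ℂ⟦X⟧)
    (hf : opT A f = C k * (1 + X) * f) :
    opP A p q c f = (1 + X) * (C k * (C k + C p - 1) * (C k + C q - 1) * (1 - X) ^ 2
      + X * (2 * C k + C p) * (2 * C k + C q) * (C k + C c)) * f := by
  have h2 : opT A (opT A f) =
      (C k * X * (1 - X) + (C k) ^ 2 * (1 + X) ^ 2) * f := by
    rw [hf, opT_mul, hf]; simp [Derivation.leibniz]; ring
  have h3 : opT A (opT A (opT A f)) =
      (X * (1 - X) * (C k * (1 - 2 * X) + 2 * (C k) ^ 2 * (1 + X)) +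
        C k * (1 + X) * (C k * X * (1 - X) + (C k) ^ 2 * (1 + X) ^ 2)) * f := by
    rw [h2, opT_mul, hf]; simp [Derivation.leibniz, Derivation.leibniz_pow]; ring
  rw [opP, h3, h2, hf, hq]
  simp only [map_sub, map_add, map_mul, map_ofNat, map_one]
  ring

lemma opP_h (A p q c : ℂ) (hq : q = 2 * c + 1 - p) (j : ℂ) (f : ℂ⟦X⟧)
    (hf : opT A f = (C j * (2 - X) - C c * X) * f) :
    opP A p q c f = (2 - X) * (C j * (2 * C j + C p - 1) * (2 * C j + C q - 1) * (1 - X)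
      + X ^ 2 * (C j + C c) * (C j + C p - C c) * (C j + 1 - C p + C c)) * f := by
  have d1 : derivative ℂ (2 - X : ℂ⟦X⟧) = -1 := by
    rw [map_sub, derivative_X, show (2 : ℂ⟦X⟧) = C 2 from (map_ofNat C 2).symm, derivative_C]; simp
  have h2 : opT A (opT A f) =
      ((1 - X) * X * (- C j - C c) + (C j * (2 - X) - C c * X) ^ 2) * f := by
    rw [hf, opT_mul, hf]; simp [Derivation.leibniz, d1]; ring
  have h3 : opT A (opT A (opT A f)) =
      ((1 - X) * X * ((1 - 2 * X) * (- C j - C c)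
          + 2 * (C j * (2 - X) - C c * X) * (- C j - C c)) +
        (C j * (2 - X) - C c * X) *
        ((1 - X) * X * (- C j - C c) + (C j * (2 - X) - C c * X) ^ 2)) * f := by
    rw [h2, opT_mul, hf]; simp [Derivation.leibniz, Derivation.leibniz_pow, d1]; ring
  rw [opP, h3, h2, hf, hq]
  simp only [map_sub, map_add, map_mul, map_ofNat, map_one]
  ring

lemma sum_V (A p q c : ℂ) (hq : q = 2 * c + 1 - p) (r : ℕ → ℂ) (N : ℕ)
    (hr : ∀ k < N, r (k + 1) * ((k + 1) * (k + p) * (k + q)) =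
      - (r k * ((2 * k + p) * (2 * k + q) * (k + c)))) :
    opP A p q c (∑ k ∈ Finset.range (N + 1), C (r k) * (X ^ k * bS (A + 2 * k))) =
      C (r N) * (1 + X) * X * (2 * C (N : ℂ) + C p) * (2 * C (N : ℂ) + C q) * (C (N : ℂ) + C c)
        * (X ^ N * bS (A + 2 * N)) := by
  induction N with
  | zero =>
    rw [Finset.sum_range_one, opP_C, opP_f A p q c hq _ _ (opT_f A 0)]
    simp; ring
  | succ N ih =>
    rw [Finset.sum_range_succ, opP_add, ih (fun k hk => hr k (by omega)), opP_C,
      opP_f A p q c hq _ _ (opT_f A (N + 1))]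
    have e := congrArg (C (R := ℂ)) (hr N (by omega))
    have s1 := bS_shift (A + 2 * N)
    have s2 := bS_shift (A + 2 * N + 1)
    have e3 : A + 2 * ((N + 1 : ℕ) : ℂ) = A + 2 * N + 1 + 1 := by push_cast; ring
    rw [e3, ← s1, ← s2]
    push_cast
    simp only [map_sub, map_add, map_mul, map_ofNat, map_one, map_neg] at e ⊢
    linear_combination (1 + X) * (1 - X) ^ 2 * X ^ (N + 1) * bS (A + 2 * N + 1 + 1) * e

lemma sum_W (p q c : ℂ) (m : ℕ) (hq : q = 2 * c + 1 - p) (r : ℕ → ℂ) (N : ℕ) (hN : N ≤ m)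
    (hr : ∀ j < N, r (j + 1) * ((j + 1) * (2 * j + 1 + p) * (2 * j + 1 + q)) =
      - (r j * ((j + c) * (j + p - c) * (j + 1 - p + c)))) :
    opP (c - m) p q c (∑ j ∈ Finset.range (N + 1),
        C (r j) * (X ^ (2 * j) * (1 - X) ^ (m - j))) =
      C (r N) * (2 - X) * X ^ 2 * (C (N : ℂ) + C c) * (C (N : ℂ) + C p - C c)
        * (C (N : ℂ) + 1 - C p + C c) * (X ^ (2 * N) * (1 - X) ^ (m - N)) := by
  induction N with
  | zero =>
    rw [Finset.sum_range_one, opP_C, opP_h _ p q c hq _ _ (opT_h c m 0 (by omega))]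
    simp; ring
  | succ N ih =>
    rw [Finset.sum_range_succ, opP_add, ih (by omega) (fun k hk => hr k (by omega)), opP_C,
      opP_h _ p q c hq _ _ (opT_h c m (N + 1) hN)]
    have e := congrArg (C (R := ℂ)) (hr N (by omega))
    have e3 : m - N = (m - (N + 1)) + 1 := by omega
    rw [e3]
    push_cast
    simp only [map_sub, map_add, map_mul, map_ofNat, map_one, map_neg] at e ⊢
    linear_combination (2 - X) * (1 - X) ^ (m - (N + 1) + 1) * X ^ (2 * N + 2) * e

lemma opT_pow (A : ℂ) (i : ℕ) (Q : ℂ⟦X⟧) :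
    opT A (X ^ i * Q) = X ^ i * (C (i : ℂ) * (1 - X) * Q + opT A Q) := by
  rw [opT_mul, X_deriv_pow]; ring

lemma cc_opT (A : ℂ) (Q : ℂ⟦X⟧) : constantCoeff (opT A Q) = 0 := by
  simp [opT]

lemma uniq (A p q c : ℂ) (hq : q = 2 * c + 1 - p) (n : ℕ) (D : ℂ⟦X⟧)
    (h0 : constantCoeff D = 0) (hP : X ^ (n + 1) ∣ opP A p q c D)
    (hp : ∀ i < n, p + i ≠ 0) (hqn : ∀ i < n, q + i ≠ 0) :
    X ^ (n + 1) ∣ D := by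
  suffices h : ∀ i ≤ n, X ^ (i + 1) ∣ D from h n le_rfl
  intro i
  induction i with
  | zero => intro _; simpa using X_dvd_iff.2 h0
  | succ i ih =>
    intro hi
    obtain ⟨Q, rfl⟩ := ih (by omega)
    obtain ⟨R, hR⟩ := (pow_dvd_pow (X : ℂ⟦X⟧) (show i + 1 + 1 ≤ n + 1 by omega)).trans hP
    simp only [opP, opT_pow] at hR
    rw [pow_succ X (i + 1), mul_assoc (X ^ (i + 1)), mul_left_comm _ (X ^ (i + 1)),
      mul_left_comm _ (X ^ (i + 1)), mul_left_comm _ (X ^ (i + 1)),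
      ← mul_add, ← mul_add, ← mul_add] at hR
    have hR' := mul_left_cancel₀ (pow_ne_zero _ X_ne_zero) hR
    have h := congrArg (constantCoeff (R := ℂ)) hR'
    simp [cc_opT, map_ofNat] at h
    rw [pow_succ]
    apply mul_dvd_mul_left
    rw [X_dvd_iff]
    have a1 : ((i : ℂ) + 1) * (p + i) * (q + i) * constantCoeff Q = 0 := by
      subst hq
      linear_combination h
    have := hp i (by omega)
    have := hqn i (by omega)
    have : (i : ℂ) + 1 ≠ 0 := by exact_mod_cast i.succ_ne_zero
    simp only [mul_eq_zero] at a1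
    tauto

lemma coeff_h (m j : ℕ) (hj : j ≤ m) :
    coeff (2 * m + 1) ((X : ℂ⟦X⟧) ^ (2 * j) * (1 - X) ^ (m - j)) = 0 := by
  have : (X : ℂ⟦X⟧) ^ (2 * j) * (1 - X) ^ (m - j) =
      (((Polynomial.X ^ (2 * j) * (1 - Polynomial.X) ^ (m - j) : Polynomial ℂ)) : ℂ⟦X⟧) := by
    simp
  rw [this, Polynomial.coeff_coe]
  apply Polynomial.coeff_eq_zero_of_natDegree_lt
  have h : (Polynomial.X ^ (2 * j) * (1 - Polynomial.X) ^ (m - j) : Polynomial ℂ).natDegree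
      ≤ 2 * j + (m - j) * 1 := by
    refine Polynomial.natDegree_mul_le_of_le (Polynomial.natDegree_X_pow_le _) ?_
    refine Polynomial.natDegree_pow_le_of_le _ ?_
    compute_degree
  omega

lemma rf_neg (n k : ℕ) (hk : k ≤ n) :
    rf (-(n : ℂ)) k * ((n - k).factorial : ℂ) = (-1) ^ k * (n.factorial : ℂ) := by
  induction k with
  | zero => simp [rf_zero]
  | succ k ih =>
    have := ih (by omega)
    rw [show n - k = (n - (k + 1)) + 1 by omega, Nat.factorial_succ] at this
    rw [rf_succ, pow_succ]
    have e : (((n - (k + 1) + 1 : ℕ)) : ℂ) = n - k := by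
      rw [show n - (k + 1) + 1 = n - k by omega, Nat.cast_sub (by omega)]
    push_cast at this e
    rw [e] at this
    linear_combination -this

lemma rf_factor (a : ℂ) (n : ℕ) (h : rf a n ≠ 0) : ∀ i < n, a + i ≠ 0 := by
  intro i hi h0
  apply h
  obtain ⟨d, rfl⟩ := Nat.exists_eq_add_of_lt hi
  rw [show i + d + 1 = (i + 1) + d by ring, rf_add, rf_succ, h0]; simp

lemma rf_ne_le (a : ℂ) (n k : ℕ) (hk : k ≤ n) (h : rf a n ≠ 0) : rf a k ≠ 0 := by
  obtain ⟨d, rfl⟩ := Nat.exists_eq_add_of_le hk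
  rw [rf_add] at h
  exact left_ne_zero_of_mul h

noncomputable def sW (p q c : ℂ) : ℕ → ℂ
  | 0 => 1
  | j + 1 => - (sW p q c j * ((j + c) * (j + p - c) * (j + 1 - p + c))) /
      ((j + 1) * (2 * j + 1 + p) * (2 * j + 1 + q))

/-- The coefficient of `X^(2m+1)` vanishes. -/
lemma main_coeff (p q c : ℂ) (m : ℕ) (hq : q = 2 * c + 1 - p) (r : ℕ → ℂ) (r0 : r 0 = 1)
    (hr : ∀ k < 2 * m + 1, r (k + 1) * ((k + 1) * (k + p) * (k + q)) =
      - (r k * ((2 * k + p) * (2 * k + q) * (k + c))))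
    (hp : ∀ i < 2 * m + 1, p + (i : ℕ) ≠ 0) (hqn : ∀ i < 2 * m + 1, q + (i : ℕ) ≠ 0) :
    ∑ k ∈ Finset.range (2 * m + 2),
      r k * (rf (c - m + 2 * k) (2 * m + 1 - k) / ((2 * m + 1 - k).factorial : ℂ)) = 0 := by
  set V : ℂ⟦X⟧ :=
    ∑ k ∈ Finset.range (2 * m + 1 + 1), C (r k) * (X ^ k * bS (c - m + 2 * k)) with hV
  set W : ℂ⟦X⟧ :=
    ∑ j ∈ Finset.range (m + 1), C (sW p q c j) * (X ^ (2 * j) * (1 - X) ^ (m - j)) with hW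
  have PV := sum_V (c - m) p q c hq r (2 * m + 1) hr
  have PW := sum_W p q c m hq (sW p q c) m le_rfl (by
    intro j hj
    have a1 := hp (2 * j + 1) (by omega)
    have a2 := hqn (2 * j + 1) (by omega)
    have a3 : (j : ℂ) + 1 ≠ 0 := by exact_mod_cast j.succ_ne_zero
    push_cast at a1 a2
    rw [sW, div_mul_cancel₀]
    refine mul_ne_zero (mul_ne_zero a3 ?_) ?_
    · intro h; apply a1; linear_combination h
    · intro h; apply a2; linear_combination h)
  rw [← hV] at PV
  rw [← hW] at PW
  have hD : opP (c - m) p q c (V + C (-1) * W) =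
      opP (c - m) p q c V + C (-1) * opP (c - m) p q c W := by rw [opP_add, opP_C]
  have key : X ^ (2 * m + 1 + 1) ∣ V + C (-1) * W := by
    apply uniq (c - m) p q c hq _ _ _ _ hp hqn
    · have e1 : constantCoeff V = 1 := by
        rw [hV, Finset.sum_range_succ', map_add, map_sum]
        simp [r0, bS, rf_zero]
      have e2 : constantCoeff W = 1 := by
        rw [hW, Finset.sum_range_succ', map_add, map_sum]
        simp [sW]
      simp [e1, e2]
    · rw [hD, PV, PW]
      refine dvd_add ?_ (Dvd.dvd.mul_left ?_ _)
      · rw [pow_succ X (2 * m + 1)]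
        refine ⟨C (r (2 * m + 1)) * (1 + X) * (2 * C ((2 * m + 1 : ℕ) : ℂ) + C p)
          * (2 * C ((2 * m + 1 : ℕ) : ℂ) + C q) * (C ((2 * m + 1 : ℕ) : ℂ) + C c)
          * bS (c - m + 2 * (2 * m + 1 : ℕ)), by ring⟩
      · refine ⟨C (sW p q c m) * (2 - X) * (C (m : ℂ) + C c) * (C (m : ℂ) + C p - C c)
        * (C (m : ℂ) + 1 - C p + C c) * (1 - X) ^ (m - m), by ring⟩
  have h := X_pow_dvd_iff.1 key (2 * m + 1) (by omega)
  have hw : coeff (2 * m + 1) W = 0 := by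
    rw [hW, map_sum]
    refine Finset.sum_eq_zero fun j hj => ?_
    rw [coeff_C_mul, coeff_h m j (by have := Finset.mem_range.1 hj; omega), mul_zero]
  rw [map_add, coeff_C_mul, hw, mul_zero, add_zero, hV, map_sum] at h
  rw [← h]
  refine Finset.sum_congr rfl fun k hk => ?_
  have hk' : k ≤ 2 * m + 1 := by have := Finset.mem_range.1 hk; omega
  rw [coeff_C_mul, coeff_X_pow_mul', if_pos hk', bS, coeff_mk]

end

theorem andrews_5F4 (m : ℕ) (x z : ℂ)
    (h1 : ∀ k ≤ 2 * m + 1, rf (x / 2 + 1 / 2) k ≠ 0)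
    (h2 : ∀ k ≤ 2 * m + 1, rf (x / 2 + 1) k ≠ 0)
    (h3 : ∀ k ≤ 2 * m + 1, rf (2 * z + 2 * m + 2) k ≠ 0)
    (h4 : ∀ k ≤ 2 * m + 1, rf (2 * x - 2 * z + 1) k ≠ 0) :
    ∑ k ∈ Finset.range (2 * m + 2),
        rf (-2 * m - 1) k * rf (x + 2 * m + 2) k * rf (x - z + 1 / 2) k *
            rf (x + m + 1) k * rf (z + m + 1) k /
          ((k.factorial : ℂ) * rf (x / 2 + 1 / 2) k * rf (x / 2 + 1) k *
            rf (2 * z + 2 * m + 2) k * rf (2 * x - 2 * z + 1) k) = 0 := by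
  have hp := rf_factor _ _ (h4 _ le_rfl)
  have hq := rf_factor _ _ (h3 _ le_rfl)
  have hA : rf (x + 1) (2 * (2 * m + 1)) ≠ 0 := by
    rw [rf_double]
    exact mul_ne_zero (mul_ne_zero (by simp) (h1 _ le_rfl)) (h2 _ le_rfl)
  have hAn := rf_ne_le _ _ (2 * m + 1) (by omega) hA
  have fac : ∀ k : ℕ, (k.factorial : ℂ) ≠ 0 := fun k => by exact_mod_cast k.factorial_ne_zero
  have key := main_coeff (2 * x - 2 * z + 1) (2 * z + 2 * m + 2) (x + m + 1) m (by ring)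
    (fun k => (-4) ^ k * rf (x - z + 1 / 2) k * rf (x + m + 1) k * rf (z + m + 1) k /
      ((k.factorial : ℂ) * rf (2 * z + 2 * m + 2) k * rf (2 * x - 2 * z + 1) k))
    (by simp [rf_zero])
    (by
      intro k hk
      have a1 := h3 k (by omega)
      have a2 := h4 k (by omega)
      have a3 := hp k hk
      have a4 := hq k hk
      have a5 : (k : ℂ) + 1 ≠ 0 := by exact_mod_cast k.succ_ne_zero
      have a6 := fac k
      simp only [rf_succ, Nat.factorial_succ]
      push_cast
      rw [div_mul_eq_mul_div, div_mul_eq_mul_div, ← neg_div, div_eq_div_iff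
        (by simp only [ne_eq, mul_eq_zero, not_or]; tauto)
        (by simp only [ne_eq, mul_eq_zero, not_or]; tauto)]
      ring)
    hp hq
  have hc : rf (x + 1) (2 * m + 1) / ((2 * m + 1).factorial : ℂ) ≠ 0 := div_ne_zero hAn (fac _)
  refine (mul_eq_zero.1 ?_).resolve_left hc
  rw [Finset.mul_sum, ← key]
  refine Finset.sum_congr rfl fun k hk => ?_
  have hk' : k ≤ 2 * m + 1 := by have := Finset.mem_range.1 hk; omega
  have b1 := h1 k hk'
  have b2 := h2 k hk'
  have b3 := h3 k hk'
  have b4 := h4 k hk'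
  have n1 := rf_neg (2 * m + 1) k hk'
  have n2 := rf_add (x + 1) (2 * m + 1) k
  have n3 := rf_add (x + 1) (2 * k) (2 * m + 1 - k)
  rw [show 2 * k + (2 * m + 1 - k) = 2 * m + 1 + k by omega, n2, rf_double] at n3
  have c1 : -((2 * m + 1 : ℕ) : ℂ) = -2 * m - 1 := by push_cast; ring
  have c2 : x + 1 + ((2 * m + 1 : ℕ) : ℂ) = x + 2 * m + 2 := by push_cast; ring
  have c3 : x + 1 + ((2 * k : ℕ) : ℂ) = x + m + 1 - m + 2 * k := by push_cast; ring
  rw [c1] at n1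
  rw [c2, c3] at n3
  have f1 := fac k
  have f2 := fac (2 * m + 1)
  have f3 := fac (2 * m + 1 - k)
  rw [div_mul_div_comm, div_mul_div_comm, div_eq_div_iff
    (by simp only [ne_eq, mul_eq_zero, not_or]; tauto)
    (by simp only [ne_eq, mul_eq_zero, not_or]; tauto)]
  have e4 : (-4 : ℂ) ^ k = (-1) ^ k * 4 ^ k := by rw [← mul_pow]; norm_num
  rw [e4]
  generalize rf (-2 * m - 1) k = u1 at *
  generalize rf (x + 2 * m + 2) k = u2 at *
  generalize rf (x + 1) (2 * m + 1) = u3 at *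
  generalize rf (x + m + 1 - m + 2 * k) (2 * m + 1 - k) = u4 at *
  generalize rf (x / 2 + 1 / 2) k = u5 at *
  generalize rf (x / 2 + 1) k = u6 at *
  generalize rf (2 * z + 2 * m + 2) k = u7 at *
  generalize rf (2 * x - 2 * z + 1) k = u8 at *
  generalize rf (x - z + 1 / 2) k = u9 at *
  generalize rf (x + m + 1) k = u10 at *
  generalize rf (z + m + 1) k = u11 at *
  linear_combination (u3 * u2 * u9 * u10 * u11 * (k.factorial : ℂ) * u7 * u8) * n1
    + ((-1) ^ k * ((2 * m + 1).factorial : ℂ) * u9 * u10 * u11 * (k.factorial : ℂ) * u7 * u8) * n3
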